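/- Let G be a Hermitian d×d complex matrix with G² = I, let H be a d×d complex matrix, and let ψ ∈ ℂ^d. Define f : ℝ → ℂ by f(θ) = ⟨ψ, exp(iθG/2) H exp(−iθG/2) ψ⟩. Then f is differentiable, and for every θ ∈ ℝ and every α ∈ ℝ with sin α ≠ 0, f'(θ) = (f(θ + α) − f(θ − α)) / (2 sin α). -/

import Mathlib

open Matrix

/-- The expectation value `f(θ) = ⟨ψ, e^{iθG/2} H e^{-iθG/2} ψ⟩` of a rotation-like gate. -/
noncomputable def rotExpectation {d : ℕ} (G H : Matrix (Fin d) (Fin d) ℂ)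
    (ψ : Fin d → ℂ) (t : ℝ) : ℂ :=
  star ψ ⬝ᵥ
    (NormedSpace.exp ((Complex.I * (t : ℂ) / 2) • G) * H *
      NormedSpace.exp ((-(Complex.I * (t : ℂ) / 2)) • G)).mulVec ψ

/-!
If `G² = 1` then `e^{ixG} = cos x + i sin x G`, so conjugating `H` by the half-angle rotation
`e^{iθG/2}` produces only the quadratic expressions `cos² (θ/2)`, `sin² (θ/2)` and
`cos (θ/2) sin (θ/2)`, that is, a function `a + cos θ b + sin θ c`. Every real-linear image of it
has the same form, and for such a function the difference of two values symmetric about `θ` is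
exactly `2 sin α` times the derivative at `θ`.
-/

section FirstHarmonic

/-- The trigonometric polynomial `a + cos t • b + sin t • c` of degree one, with coefficients in a
real vector space. -/
noncomputable def firstHarmonic {E : Type*} [AddCommGroup E] [Module ℝ E] (a b c : E) (t : ℝ) : E :=
  a + Real.cos t • b + Real.sin t • c

theorem map_firstHarmonic {E F : Type*} [AddCommGroup E] [Module ℝ E] [AddCommGroup F] [Module ℝ F]
    (φ : E →ₗ[ℝ] F) (a b c : E) (t : ℝ) :
    φ (firstHarmonic a b c t) = firstHarmonic (φ a) (φ b) (φ c) t := by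
  simp only [firstHarmonic, map_add, map_smul]

theorem firstHarmonic_add_sub_firstHarmonic_sub {E : Type*} [AddCommGroup E] [Module ℝ E]
    (a b c : E) (θ α : ℝ) :
    firstHarmonic a b c (θ + α) - firstHarmonic a b c (θ - α) =
      (2 * Real.sin α) • (-Real.sin θ • b + Real.cos θ • c) := by
  simp only [firstHarmonic, Real.cos_add, Real.cos_sub, Real.sin_add, Real.sin_sub]
  module

variable {E : Type*} [NormedAddCommGroup E] [NormedSpace ℝ E]

theorem hasDerivAt_firstHarmonic (a b c : E) (θ : ℝ) :
    HasDerivAt (firstHarmonic a b c) (-Real.sin θ • b + Real.cos θ • c) θ :=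
  (((Real.hasDerivAt_cos θ).smul_const b).const_add a).add ((Real.hasDerivAt_sin θ).smul_const c)

theorem hasDerivAt_firstHarmonic_shift (a b c : E) (θ : ℝ) {α : ℝ} (hα : Real.sin α ≠ 0) :
    HasDerivAt (firstHarmonic a b c)
      ((2 * Real.sin α)⁻¹ • (firstHarmonic a b c (θ + α) - firstHarmonic a b c (θ - α))) θ := by
  rw [firstHarmonic_add_sub_firstHarmonic_sub, inv_smul_smul₀ (mul_ne_zero two_ne_zero hα)]
  exact hasDerivAt_firstHarmonic a b c θ

end FirstHarmonic

section Involution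

variable {A : Type*} [Ring A] [Algebra ℂ A] [TopologicalSpace A] [IsTopologicalRing A]

/-- The observable `H` in the Heisenberg picture of the gate `e^{-itG/2}`, namely
`e^{itG/2} H e^{-itG/2}`. The algebra is only assumed to be topological, because a matrix algebra
carries no canonical norm. -/
noncomputable def rotatedObservable (G H : A) (t : ℝ) : A :=
  NormedSpace.exp ((Complex.I * (t : ℂ) / 2) • G) * H *
    NormedSpace.exp ((-(Complex.I * (t : ℂ) / 2)) • G)

variable [ContinuousSMul ℂ A] [T2Space A] {G : A}

theorem exp_smul_of_mul_self_eq_one (hG : G * G = 1) (z : ℂ) :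
    NormedSpace.exp (z • G) = Complex.cosh z • (1 : A) + Complex.sinh z • G := by
  have hG_even (n : ℕ) : G ^ (2 * n) = 1 := by rw [pow_mul, pow_two, hG, one_pow]
  have hG_odd (n : ℕ) : G ^ (2 * n + 1) = G := by rw [pow_succ, hG_even, one_mul]
  rw [NormedSpace.exp_eq_tsum ℂ]
  refine (HasSum.even_add_odd ?_ ?_).tsum_eq
  · simpa only [smul_pow, hG_even, smul_smul, inv_mul_eq_div] using
      (Complex.hasSum_cosh z).smul_const (1 : A)
  · simpa only [smul_pow, hG_odd, smul_smul, inv_mul_eq_div] using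
      (Complex.hasSum_sinh z).smul_const G

theorem exp_I_mul_smul_of_mul_self_eq_one (hG : G * G = 1) (x : ℂ) :
    NormedSpace.exp ((Complex.I * x) • G) =
      Complex.cos x • (1 : A) + (Complex.I * Complex.sin x) • G := by
  rw [exp_smul_of_mul_self_eq_one hG, mul_comm Complex.I x, Complex.cosh_mul_I, Complex.sinh_mul_I,
    mul_comm Complex.I]

theorem exp_mul_mul_exp_neg_of_mul_self_eq_one (hG : G * G = 1) (H : A) (x : ℂ) :
    NormedSpace.exp ((Complex.I * x) • G) * H * NormedSpace.exp ((-(Complex.I * x)) • G) =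
      Complex.cos x ^ 2 • H + Complex.sin x ^ 2 • (G * H * G) +
        (Complex.sin x * Complex.cos x) • Complex.I • (G * H - H * G) := by
  rw [← mul_neg, exp_I_mul_smul_of_mul_self_eq_one hG, exp_I_mul_smul_of_mul_self_eq_one hG,
    Complex.cos_neg, Complex.sin_neg]
  simp only [add_mul, mul_add, smul_mul_assoc, mul_smul_comm, one_mul, mul_one]
  linear_combination (norm := module) (-Complex.sin x ^ 2 * Complex.I_sq) • (G * H * G)

theorem rotatedObservable_eq_firstHarmonic (hG : G * G = 1) (H : A) (t : ℝ) :
    rotatedObservable G H t =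
      firstHarmonic ((1 / 2 : ℂ) • (H + G * H * G)) ((1 / 2 : ℂ) • (H - G * H * G))
        ((Complex.I / 2) • (G * H - H * G)) t := by
  have cos_sq_half : Complex.cos (t / 2) ^ 2 = (1 + Complex.cos t) / 2 := by
    rw [Complex.cos_sq, mul_div_cancel₀ _ two_ne_zero]; ring
  have sin_sq_half : Complex.sin (t / 2) ^ 2 = (1 - Complex.cos t) / 2 := by
    rw [Complex.sin_sq, cos_sq_half]; ring
  have sin_mul_cos_half : Complex.sin (t / 2) * Complex.cos (t / 2) = Complex.sin t / 2 := by
    rw [eq_div_iff two_ne_zero, mul_comm, ← mul_assoc, ← Complex.sin_two_mul,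
      mul_div_cancel₀ _ two_ne_zero]
  rw [rotatedObservable, mul_div_assoc, exp_mul_mul_exp_neg_of_mul_self_eq_one hG, cos_sq_half,
    sin_sq_half, sin_mul_cos_half]
  simp only [firstHarmonic, ← Complex.coe_smul, Complex.ofReal_cos, Complex.ofReal_sin]
  module

variable {E : Type*} [NormedAddCommGroup E] [NormedSpace ℝ E]

theorem stmt_5_general (hG : G * G = 1) (H : A) (φ : A →ₗ[ℝ] E) (θ : ℝ) {α : ℝ}
    (hα : Real.sin α ≠ 0) :
    HasDerivAt (fun t => φ (rotatedObservable G H t))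
      ((2 * Real.sin α)⁻¹ •
        (φ (rotatedObservable G H (θ + α)) - φ (rotatedObservable G H (θ - α)))) θ := by
  simp only [rotatedObservable_eq_firstHarmonic hG, map_firstHarmonic]
  exact hasDerivAt_firstHarmonic_shift _ _ _ θ hα

end Involution

theorem hasDerivAt_rotExpectation_shift {d : ℕ} {G : Matrix (Fin d) (Fin d) ℂ} (hG : G * G = 1)
    (H : Matrix (Fin d) (Fin d) ℂ) (ψ : Fin d → ℂ) (θ : ℝ) {α : ℝ} (hα : Real.sin α ≠ 0) :
    HasDerivAt (rotExpectation G H ψ)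
      ((rotExpectation G H ψ (θ + α) - rotExpectation G H ψ (θ - α)) /
        (2 * (Real.sin α : ℂ))) θ := by
  have shift_rule : HasDerivAt (rotExpectation G H ψ)
      ((2 * Real.sin α)⁻¹ • (rotExpectation G H ψ (θ + α) - rotExpectation G H ψ (θ - α))) θ :=
    stmt_5_general hG H (dotProductBilin ℝ ℝ (star ψ) ∘ₗ (mulVecBilin ℝ ℝ).flip ψ) θ hα
  convert shift_rule using 1
  rw [Complex.real_smul, Complex.ofReal_inv, Complex.ofReal_mul, Complex.ofReal_ofNat,
    div_eq_inv_mul]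

/-- Parameter-shift rule: for a generator with `G² = I`, the derivative of the
expectation equals a finite difference of two shifted evaluations. -/
theorem stmt_5 {d : ℕ} (G H : Matrix (Fin d) (Fin d) ℂ)
    (hG : Gᴴ = G) (hG2 : G * G = 1) (ψ : Fin d → ℂ) :
    (∀ θ : ℝ, DifferentiableAt ℝ (rotExpectation G H ψ) θ) ∧
      ∀ θ α : ℝ, Real.sin α ≠ 0 →
        deriv (rotExpectation G H ψ) θ =
          (rotExpectation G H ψ (θ + α) - rotExpectation G H ψ (θ - α)) /
            (2 * (Real.sin α : ℂ)) := by
  exact ⟨fun θ =>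
      (hasDerivAt_rotExpectation_shift hG2 H ψ θ (α := Real.pi / 2) (by simp)).differentiableAt,
    fun θ _ hα => (hasDerivAt_rotExpectation_shift hG2 H ψ θ hα).deriv⟩
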